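/- Let φ : ℝ → ℝ be slope restricted with slopes [μ, η], let λ : Fin n → ℝ have all entries strictly positive, let T be the diagonal matrix with diagonal λ, and let ψ : ℝⁿ → ℝⁿ apply φ componentwise, ψ(z)ᵢ = φ(zᵢ). Then for all z_a, z_b ∈ ℝⁿ, the stacked vector v = (ψ(z_a) − ψ(z_b), z_a − z_b) ∈ ℝ²ⁿ satisfies vᵀ P_slope v ≥ 0, where P_slope is the 2×2 block matrix [[−2T, (μ+η)T], [(μ+η)T, −2μηT]]. -/

import Mathlib

open Matrix

section SlopeRestricted

variable {ι R : Type*} [CommRing R]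

/-- A function `φ` is slope restricted with slopes `[μ, η]` if each increment `φ a - φ b` lies
between `μ (a - b)` and `η (a - b)`. Encoding this as the sign of a product covers both orders of
`a` and `b` at once; it is also symmetric in `μ` and `η`. -/
def IsSlopeRestricted [LE R] (μ η : R) (φ : R → R) : Prop :=
  ∀ a b : R, 0 ≤ (μ * (a - b) - (φ a - φ b)) * ((φ a - φ b) - η * (a - b))

/-- The multiplier matrix `P_slope = [[-2T, (μ+η)T], [(μ+η)T, -2μηT]]` of the quadratic constraint
for slopes `[μ, η]`; the first block of coordinates is the output increment of the nonlinearity,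
the second one its input increment. -/
def slopeMultiplier (μ η : R) (T : Matrix ι ι R) : Matrix (ι ⊕ ι) (ι ⊕ ι) R :=
  fromBlocks ((-2 : R) • T) ((μ + η) • T) ((μ + η) • T) ((-(2 * μ * η)) • T)

variable [Fintype ι]

-- Both orders of the two factors appear because `T` need not be symmetric.
theorem sumElim_dotProduct_slopeMultiplier_mulVec (μ η : R) (T : Matrix ι ι R) (u w : ι → R) :
    Sum.elim u w ⬝ᵥ (slopeMultiplier μ η T *ᵥ Sum.elim u w) =
      (μ • w - u) ⬝ᵥ (T *ᵥ (u - η • w)) + (u - η • w) ⬝ᵥ (T *ᵥ (μ • w - u)) := by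
  simp only [slopeMultiplier, fromBlocks_mulVec, Sum.elim_comp_inl, Sum.elim_comp_inr,
    sumElim_dotProduct_sumElim, smul_mulVec, mulVec_sub, mulVec_smul, dotProduct_add,
    dotProduct_sub, sub_dotProduct, dotProduct_smul, smul_dotProduct, smul_eq_mul]
  ring

variable [DecidableEq ι] [PartialOrder R] [IsOrderedRing R]

theorem dotProduct_diagonal_mulVec_nonneg {l x y : ι → R} (hl : ∀ i, 0 ≤ l i)
    (hxy : ∀ i, 0 ≤ x i * y i) : 0 ≤ x ⬝ᵥ (diagonal l *ᵥ y) := by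
  refine Finset.sum_nonneg fun i _ => ?_
  rw [mulVec_diagonal, mul_left_comm]
  exact mul_nonneg (hl i) (hxy i)

theorem slope_multiplier_quadratic_constraint_general {φ : ι → R → R} {μ η : R}
    (hφ : ∀ i, IsSlopeRestricted μ η (φ i)) {l : ι → R} (hl : ∀ i, 0 ≤ l i) (za zb : ι → R) :
    0 ≤ Sum.elim (Pi.map φ za - Pi.map φ zb) (za - zb) ⬝ᵥ
      (slopeMultiplier μ η (diagonal l) *ᵥ
        Sum.elim (Pi.map φ za - Pi.map φ zb) (za - zb)) := by
  set u := Pi.map φ za - Pi.map φ zb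
  set w := za - zb
  have sector (i : ι) : 0 ≤ (μ • w - u) i * (u - η • w) i := hφ i (za i) (zb i)
  have sector_comm (i : ι) : 0 ≤ (u - η • w) i * (μ • w - u) i :=
    (sector i).trans_eq (mul_comm _ _)
  rw [sumElim_dotProduct_slopeMultiplier_mulVec]
  exact add_nonneg (dotProduct_diagonal_mulVec_nonneg hl sector)
    (dotProduct_diagonal_mulVec_nonneg hl sector_comm)

end SlopeRestricted

/-- If `φ` is slope restricted with slopes `[μ, η]`, `λ` has strictly positive entries,
`T = diag λ`, and `ψ` applies `φ` componentwise, then for all `z_a, z_b` the stacked vector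
`v = (ψ z_a − ψ z_b, z_a − z_b)` satisfies `vᵀ P_slope v ≥ 0`, where
`P_slope = [[−2T, (μ+η)T], [(μ+η)T, −2μηT]]`. -/
theorem slope_multiplier_quadratic_constraint
    {n : ℕ} (φ : ℝ → ℝ) (μ η : ℝ)
    (hφ : ∀ a b : ℝ, (μ * (a - b) - (φ a - φ b)) * ((φ a - φ b) - η * (a - b)) ≥ 0)
    (l : Fin n → ℝ) (hl : ∀ i, 0 < l i)
    (T : Matrix (Fin n) (Fin n) ℝ) (hT : T = Matrix.diagonal l)
    (ψ : (Fin n → ℝ) → (Fin n → ℝ)) (hψ : ∀ z i, ψ z i = φ (z i))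
    (Pslope : Matrix (Fin n ⊕ Fin n) (Fin n ⊕ Fin n) ℝ)
    (hP : Pslope = Matrix.fromBlocks ((-2 : ℝ) • T) ((μ + η) • T)
      ((μ + η) • T) ((-(2 * μ * η)) • T))
    (za zb : Fin n → ℝ) :
    (Sum.elim (ψ za - ψ zb) (za - zb)) ⬝ᵥ (Pslope *ᵥ (Sum.elim (ψ za - ψ zb) (za - zb))) ≥ 0 := by
  obtain rfl : ψ = Pi.map fun _ => φ := funext₂ hψ
  subst hT hP
  exact slope_multiplier_quadratic_constraint_general (fun _ => hφ) (fun i => (hl i).le) za zb
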